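/- Suppose the Markov chain Φ is ψ-irreducible. Then the following are equivalent. (1) There exist A ∈ B+(X) and κ > 1 such that sup_{x∈A} Σ_{n≥1} κ^n P^n(x,A) < ∞. (2) There exist A ∈ B+(X) and κ > 1 such that sup_{x∈A} E_x[κ^{τ_A} 1_{τ_A<∞}] < 1. (3) There exist A ∈ B+(X) and κ > 1 such that sup_{x∈A} L(x,A) < 1 and sup_{x∈A} E_x[κ^{τ_A} 1_{τ_A<∞}] < ∞. (4) There exist A ∈ B+(X), constants b, λ ∈ (0,1), and a measurable function W ≥ 1_A with W(x_0) < ∞ for some x_0 ∈ X, satisfying PW(x) ≤ λ W(x) 1_{A^c}(x) + b 1_A(x) for all x ∈ X. (5) Φ is geometrically transient. -/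

import Mathlib

/-!
The implications are proved in the cycle (1) → (3) → (2) → (4) → (5) → (1).

* (1) → (3).  Let `U(x) = ∑_{n ≥ 1} P^n(x, A)` be bounded on `A`.  If `L(·, A) = 1` held `ψ`-a.e. on
  `A`, then `U` would be infinite `ψ`-a.e. on `A`: since `ψ` is maximal, `ψ`-null sets are
  `P(x, ·)`-null for `ψ`-a.e. `x`, and so `U ≥ k` a.e. on `A` gives
  `U(x) ≥ (1 + k) P_x(τ_A ≤ N)` a.e., by induction on `N`, hence `U ≥ k + 1` a.e. on `A`
  (`green_step`).  So some `A' = {x ∈ A : L(x, A) ≤ q}` with `q < 1` is in `B⁺`.  It works, because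
  `L(x, A') ≤ L(x, A)` and `F^n(x, A') ≤ P^n(x, A') ≤ P^n(x, A)`.
* (3) → (2).  With `s = κ^{1/k}`, Bernoulli's inequality gives `s^n ≤ 1 + κ^n / k`, so
  `E_x[s^τ] ≤ L(x, A) + E_x[κ^τ] / k`, which is uniformly below `1` for `k` large.
* (2) → (4).  Take `W(x) = E_x[κ^{σ_A}]`, with `σ_A` the first hitting time;
  `PW = κ⁻¹ E_x[κ^{τ_A}]`.
* (4) → (5).  Lowering `W` to `1` on `A` yields `PW ≤ ρ W` everywhere for some `ρ < 1`, hence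
  `P^n(x, B) ≤ c ρ^n W(x)` for each measurable `B` on which `1 ≤ c W` (`iterP_le_of_drift`).  By
  irreducibility `W > 0` everywhere and `ψ {W = ∞} = 0`, so the sets `{(i+1)⁻¹ ≤ W ≤ i+1}` witness
  geometric transience.
-/

open MeasureTheory ProbabilityTheory
open scoped ENNReal NNReal Classical

namespace MarkovTransience

variable {X : Type*} [MeasurableSpace X]

/-- `iterP P n x A` is the `n`-step transition probability `P^n(x, A)`. -/
noncomputable def iterP (P : Kernel X X) : ℕ → X → Set X → ℝ≥0∞
  | 0 => fun x A => A.indicator (fun _ => 1) x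
  | n + 1 => fun x A => ∫⁻ y, iterP P n y A ∂(P x)

/-- `retF P A n x` is `F^n(x, A) = P_x(τ_A = n)`, the probability that the first
return to `A` happens at time `n`. -/
noncomputable def retF (P : Kernel X X) (A : Set X) : ℕ → X → ℝ≥0∞
  | 0 => fun _ => 0
  | 1 => fun x => P x A
  | n + 2 => fun x => ∫⁻ y in Aᶜ, retF P A (n + 1) y ∂(P x)

/-- `retL P A x = L(x, A) = P_x(τ_A < ∞)`. -/
noncomputable def retL (P : Kernel X X) (A : Set X) (x : X) : ℝ≥0∞ :=
  ∑' n, retF P A n x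

/-- `retE P A r x = E_x[r(τ_A) 1_{τ_A < ∞}]`. -/
noncomputable def retE (P : Kernel X X) (A : Set X) (r : ℕ → ℝ≥0∞) (x : X) : ℝ≥0∞ :=
  ∑' n, r n * retF P A n x

/-- `hitE P A r x = E_x[r(σ_A) 1_{σ_A < ∞}]`, `σ_A` the first hitting time. -/
noncomputable def hitE (P : Kernel X X) (A : Set X) (r : ℕ → ℝ≥0∞) (x : X) : ℝ≥0∞ :=
  if x ∈ A then r 0 else retE P A r x

/-- `act P W x = PW(x) = ∫ W(y) P(x, dy)`. -/
noncomputable def act (P : Kernel X X) (W : X → ℝ≥0∞) (x : X) : ℝ≥0∞ :=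
  ∫⁻ y, W y ∂(P x)

/-- `ψ`-irreducibility: `ψ` is a nontrivial σ-finite measure such that every set of
positive `ψ`-measure is reached with positive probability from every starting point. -/
def IsIrreducibility (P : Kernel X X) (ψ : Measure X) : Prop :=
  ψ ≠ 0 ∧ SigmaFinite ψ ∧
    ∀ A : Set X, MeasurableSet A → 0 < ψ A → ∀ x, 0 < ∑' n, iterP P (n + 1) x A

/-- `ψ` is a maximal irreducibility measure for `P`. -/
def IsMaxIrreducibility (P : Kernel X X) (ψ : Measure X) : Prop :=
  IsIrreducibility P ψ ∧ ∀ ψ' : Measure X, IsIrreducibility P ψ' → ψ' ≪ ψ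

/-- `A ∈ B⁺(X)`: a measurable set of positive `ψ`-measure. -/
def InBPlus (ψ : Measure X) (A : Set X) : Prop :=
  MeasurableSet A ∧ 0 < ψ A

/-- A petite set. -/
def PetiteSet (P : Kernel X X) (A : Set X) : Prop :=
  ∃ (a : ℕ → ℝ≥0∞) (ν : Measure X), (∑' n, a n) = 1 ∧ ν ≠ 0 ∧
    ∀ x ∈ A, ∀ B : Set X, MeasurableSet B → ν B ≤ ∑' n, a n * iterP P (n + 1) x B

/-- The chain is transient. -/
def Transient (P : Kernel X X) (ψ : Measure X) : Prop :=
  IsMaxIrreducibility P ψ ∧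
    ∃ A : ℕ → Set X, (⋃ i, A i) = Set.univ ∧
      ∀ i, InBPlus ψ (A i) ∧ (⨆ x ∈ A i, ∑' n, iterP P (n + 1) x (A i)) < ⊤

/-- A uniformly geometric transient set. -/
def UnifGeomTransientSet (P : Kernel X X) (A : Set X) : Prop :=
  ∃ κ : ℝ≥0, 1 < κ ∧ (⨆ x ∈ A, ∑' n, (κ : ℝ≥0∞) ^ (n + 1) * iterP P (n + 1) x A) < ⊤

/-- The chain is geometrically transient. -/
def GeomTransient (P : Kernel X X) (ψ : Measure X) : Prop :=
  IsMaxIrreducibility P ψ ∧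
    ∃ (D : Set X) (A : ℕ → Set X), ψ D = 0 ∧ D ∪ (⋃ i, A i) = Set.univ ∧
      ∀ i, InBPlus ψ (A i) ∧ UnifGeomTransientSet P (A i)

/-- A uniformly `ℓ`-transient set. -/
def UnifAlgTransientSet (P : Kernel X X) (ℓ : ℕ) (A : Set X) : Prop :=
  (⨆ x ∈ A, ∑' n, ((n + 1 : ℕ) : ℝ≥0∞) ^ ℓ * iterP P (n + 1) x A) < ⊤

/-- The chain is algebraically (`ℓ`-)transient. -/
def AlgTransient (P : Kernel X X) (ψ : Measure X) (ℓ : ℕ) : Prop :=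
  IsMaxIrreducibility P ψ ∧
    ∃ (D : Set X) (A : ℕ → Set X), ψ D = 0 ∧ D ∪ (⋃ i, A i) = Set.univ ∧
      ∀ i, InBPlus ψ (A i) ∧ UnifAlgTransientSet P ℓ (A i)

/-- `lifeDist P x n = P_x(τ = n)` where `τ = sup{n : Φ_n ∈ X}` is the lifetime of the
(sub-stochastic) chain, so that `P_x(τ = n) = P^n(x, X) - P^{n+1}(x, X)`. -/
noncomputable def lifeDist (P : Kernel X X) (x : X) (n : ℕ) : ℝ≥0∞ :=
  iterP P n x Set.univ - iterP P (n + 1) x Set.univ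

/-- `lifeE P r x = E_x[r(τ)]` for the lifetime `τ` (on the event `τ < ∞`). -/
noncomputable def lifeE (P : Kernel X X) (r : ℕ → ℝ≥0∞) (x : X) : ℝ≥0∞ :=
  ∑' n, r n * lifeDist P x n

/-- The family `Λ` of normalized increasing submultiplicative rate functions. -/
def InLambda (r : ℕ → ℝ≥0) : Prop :=
  Monotone r ∧ r 0 = 1 ∧ (∀ n, 1 ≤ r n) ∧ ∀ m n, r (m + n) ≤ r m * r n

/-! ### Iterates and return probabilities -/

lemma iterP_one (P : Kernel X X) (x : X) {A : Set X} (hA : MeasurableSet A) :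
    iterP P 1 x A = P x A := by
  simp only [iterP]
  rw [lintegral_indicator hA]; simp

lemma measurable_iterP (P : Kernel X X) {A : Set X} (hA : MeasurableSet A) (n : ℕ) :
    Measurable fun x => iterP P n x A := by
  induction n with
  | zero => exact measurable_const.indicator hA
  | succ n ih => exact ih.lintegral_kernel

lemma iterP_mono (P : Kernel X X) {A B : Set X} (h : A ⊆ B) (n : ℕ) (x : X) :
    iterP P n x A ≤ iterP P n x B := by
  induction n generalizing x with
  | zero =>
    exact Set.indicator_le_indicator_of_subset (f := fun _ => (1 : ℝ≥0∞)) h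
      (fun _ => zero_le_one) x
  | succ n ih => exact lintegral_mono fun y => ih y

lemma measurable_retF (P : Kernel X X) {A : Set X} (hA : MeasurableSet A) :
    ∀ n, Measurable (retF P A n)
  | 0 => measurable_const
  | 1 => P.measurable_coe hA
  | n + 2 => by
    simp only [retF, ← lintegral_indicator hA.compl]
    exact ((measurable_retF P hA (n + 1)).indicator hA.compl).lintegral_kernel

lemma retF_le_iterP (P : Kernel X X) {A : Set X} (hA : MeasurableSet A) :
    ∀ n x, retF P A n x ≤ iterP P n x A
  | 0, _ => zero_le
  | 1, x => (iterP_one P x hA).ge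
  | n + 2, _ => (setLIntegral_le_lintegral _ _).trans
      (lintegral_mono fun y => retF_le_iterP P hA (n + 1) y)

/-- `hitBy P A N x = P_x(τ_A ≤ N)`. -/
noncomputable def hitBy (P : Kernel X X) (A : Set X) (N : ℕ) (x : X) : ℝ≥0∞ :=
  ∑ n ∈ Finset.range (N + 1), retF P A n x

lemma measurable_hitBy (P : Kernel X X) {A : Set X} (hA : MeasurableSet A) (N : ℕ) :
    Measurable (hitBy P A N) :=
  Finset.measurable_fun_sum _ fun n _ => measurable_retF P hA n

lemma hitBy_succ (P : Kernel X X) {A : Set X} (hA : MeasurableSet A) (N : ℕ) (x : X) :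
    hitBy P A (N + 1) x = ∫⁻ y, (if y ∈ A then 1 else hitBy P A N y) ∂(P x) := by
  rw [← lintegral_add_compl _ hA]
  have h1 : ∫⁻ y in A, (if y ∈ A then 1 else hitBy P A N y) ∂(P x) = P x A := by
    rw [setLIntegral_congr_fun (g := fun _ => 1) hA fun y hy => by simp [hy]]
    simp
  have h2 : ∫⁻ y in Aᶜ, (if y ∈ A then 1 else hitBy P A N y) ∂(P x)
      = ∑ n ∈ Finset.range N, retF P A (n + 2) x := by
    rw [setLIntegral_congr_fun (g := hitBy P A N) hA.compl fun y hy => by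
      simp [show y ∉ A from hy]]
    unfold hitBy
    rw [lintegral_finsetSum _ fun n _ => measurable_retF P hA n, Finset.sum_range_succ']
    simp [retF]
  rw [h1, h2]
  unfold hitBy
  rw [Finset.sum_range_succ', Finset.sum_range_succ']
  simp [retF, add_comm]

lemma hitBy_le_one (P : Kernel X X) (hP : ∀ x, P x Set.univ ≤ 1) {A : Set X}
    (hA : MeasurableSet A) (N : ℕ) (x : X) : hitBy P A N x ≤ 1 := by
  induction N generalizing x with
  | zero => simp [hitBy, retF]
  | succ N ih =>
    rw [hitBy_succ P hA]
    calc _ ≤ ∫⁻ _, 1 ∂(P x) := lintegral_mono fun y => by split_ifs <;> simp [ih]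
      _ ≤ 1 := by simpa using hP x

lemma hitBy_mono (P : Kernel X X) (hP : ∀ x, P x Set.univ ≤ 1) {A B : Set X}
    (hA : MeasurableSet A) (hB : MeasurableSet B) (h : A ⊆ B) (N : ℕ) (x : X) :
    hitBy P A N x ≤ hitBy P B N x := by
  induction N generalizing x with
  | zero => simp [hitBy, retF]
  | succ N ih =>
    rw [hitBy_succ P hA, hitBy_succ P hB]
    refine lintegral_mono fun y => ?_
    by_cases hyA : y ∈ A
    · simp [hyA, h hyA]
    · by_cases hyB : y ∈ B
      · simpa [hyA, hyB] using hitBy_le_one P hP hA N y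
      · simpa [hyA, hyB] using ih y

lemma retL_le_iff (P : Kernel X X) (A : Set X) (x : X) (c : ℝ≥0∞) :
    retL P A x ≤ c ↔ ∀ N, hitBy P A N x ≤ c := by
  unfold retL hitBy
  constructor
  · exact fun h N => (ENNReal.sum_le_tsum _).trans h
  · intro h
    rw [ENNReal.tsum_eq_iSup_nat]
    exact iSup_le fun N =>
      (Finset.sum_le_sum_of_subset (Finset.range_mono (Nat.le_succ N))).trans (h N)

lemma retL_mono (P : Kernel X X) (hP : ∀ x, P x Set.univ ≤ 1) {A B : Set X}
    (hA : MeasurableSet A) (hB : MeasurableSet B) (h : A ⊆ B) (x : X) :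
    retL P A x ≤ retL P B x :=
  (retL_le_iff P A x _).2 fun N =>
    (hitBy_mono P hP hA hB h N x).trans ((retL_le_iff P B x _).1 le_rfl N)

lemma measurable_retE (P : Kernel X X) {A : Set X} (hA : MeasurableSet A) (r : ℕ → ℝ≥0∞) :
    Measurable (retE P A r) :=
  Measurable.tsum fun n => (measurable_retF P hA n).const_mul _

lemma measurable_retL (P : Kernel X X) {A : Set X} (hA : MeasurableSet A) :
    Measurable (retL P A) :=
  Measurable.tsum fun n => measurable_retF P hA n

/-- First-step analysis of the geometric moment of `τ_A`, with `E_x[κ^{σ_A}]` in the integrand. -/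
lemma retE_pow_eq (P : Kernel X X) {A : Set X} (hA : MeasurableSet A) (κ : ℝ≥0∞) (x : X) :
    retE P A (fun n => κ ^ n) x = κ * act P (hitE P A fun n => κ ^ n) x := by
  unfold act
  rw [← lintegral_add_compl _ hA]
  have h1 : ∫⁻ y in A, hitE P A (fun n => κ ^ n) y ∂(P x) = P x A := by
    rw [setLIntegral_congr_fun (g := fun _ => 1) hA fun y hy => by simp [hitE, hy]]
    simp
  have h2 : ∫⁻ y in Aᶜ, hitE P A (fun n => κ ^ n) y ∂(P x)
      = ∑' n, κ ^ (n + 1) * retF P A (n + 2) x := by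
    rw [setLIntegral_congr_fun (g := retE P A fun n => κ ^ n) hA.compl fun y hy => by
      simp [hitE, show y ∉ A from hy]]
    unfold retE
    rw [lintegral_tsum fun n => ((measurable_retF P hA n).const_mul _).aemeasurable,
      tsum_eq_zero_add' ENNReal.summable]
    simp only [retF, mul_zero, lintegral_zero, zero_add]
    exact tsum_congr fun n => lintegral_const_mul _ (measurable_retF P hA _)
  rw [h1, h2]
  unfold retE
  rw [tsum_eq_zero_add' ENNReal.summable, tsum_eq_zero_add' ENNReal.summable, mul_add,
    ← ENNReal.tsum_mul_left]
  simp only [retF, mul_zero, zero_add, pow_one]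
  congr 1
  exact tsum_congr fun n => by rw [pow_succ κ (n + 1)]; ring

/-! ### Maximality of the irreducibility measure -/

/-- If `A` is not reached at time `n + 1`, then at time `n` the chain avoids the points from
which `A` is reached in one step. -/
lemma iterP_support_eq_zero (P : Kernel X X) {A : Set X} (hA : MeasurableSet A) (n : ℕ) (x : X)
    (h : iterP P (n + 1) x A = 0) : iterP P n x {y | P y A ≠ 0} = 0 := by
  induction n generalizing x with
  | zero =>
    rw [iterP_one P x hA] at h
    simp [iterP, h]
  | succ n ih =>
    rw [iterP, lintegral_eq_zero_iff (measurable_iterP P hA (n + 1))] at h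
    rw [iterP]
    refine lintegral_eq_zero_of_ae_eq_zero ?_
    filter_upwards [h] with y hy using ih y hy

/-- For a maximal irreducibility measure `ψ`, a property that holds `ψ`-a.e. holds
`P(x, ·)`-a.e. for `ψ`-a.e. `x`: the measure `ψ + ψP` (for a finite version of `ψ`) is again an
irreducibility measure, hence absolutely continuous with respect to `ψ`. -/
lemma ae_ae_of_isMax (P : Kernel X X) (hP : ∀ x, P x Set.univ ≤ 1) {ψ : Measure X}
    (hψ : IsMaxIrreducibility P ψ) {p : X → Prop} (h : ∀ᵐ y ∂ψ, p y) :
    ∀ᵐ x ∂ψ, ∀ᵐ y ∂(P x), p y := by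
  obtain ⟨⟨hne, hsf, hirr⟩, hmax⟩ := hψ
  have hac := absolutelyContinuous_toFinite ψ
  have hac' := toFinite_absolutelyContinuous ψ
  set μ := ψ.toFinite with hμ
  have hfin : IsFiniteMeasure (μ.bind P) := by
    refine ⟨?_⟩
    rw [Measure.bind_apply MeasurableSet.univ P.measurable.aemeasurable]
    calc _ ≤ ∫⁻ _, 1 ∂μ := lintegral_mono fun x => hP x
      _ < ⊤ := by simp
  have key : IsIrreducibility P (μ + μ.bind P) := by
    refine ⟨fun h0 => hne ?_, inferInstance, fun A hA hpos x => ?_⟩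
    · have h1 : μ = 0 := by
        have := Measure.le_add_right (ν := μ) (ν' := μ.bind P) le_rfl
        rw [h0] at this
        exact le_antisymm this (Measure.zero_le _)
      rw [h1] at hac
      exact Measure.absolutelyContinuous_zero_iff.1 hac
    · by_cases h1 : ψ A = 0
      · have h2 : (μ.bind P) A ≠ 0 := by
          rw [Measure.add_apply, hac' h1, zero_add] at hpos
          exact hpos.ne'
        rw [Measure.bind_apply hA P.measurable.aemeasurable, Ne,
          lintegral_eq_zero_iff (P.measurable_coe hA)] at h2
        have h3 : 0 < ψ {y | P y A ≠ 0} := by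
          rw [pos_iff_ne_zero]
          intro h3
          exact h2 (ae_iff.2 (by simpa using hac' h3))
        have h4 := hirr _ (P.measurable_coe hA (measurableSet_singleton 0).compl) h3 x
        rw [pos_iff_ne_zero, Ne, ENNReal.tsum_eq_zero, not_forall] at h4 ⊢
        obtain ⟨n, hn⟩ := h4
        exact ⟨n + 1, fun h => hn (iterP_support_eq_zero P hA (n + 1) x h)⟩
      · exact hirr A hA (pos_iff_ne_zero.2 h1) x
  have h1 : ∀ᵐ y ∂(μ.bind P), p y :=
    ((Measure.le_add_left le_rfl).absolutelyContinuous.trans (hmax _ key)).ae_le h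
  exact hac.ae_le (Measure.ae_ae_of_ae_bind P.measurable.aemeasurable h1)

/-! ### From bounded expected visits to a return probability bounded away from one -/

/-- `green P A x = ∑_{n ≥ 1} P^n(x, A)`, the expected number of visits to `A` after time `0`. -/
noncomputable def green (P : Kernel X X) (A : Set X) (x : X) : ℝ≥0∞ :=
  ∑' n, iterP P (n + 1) x A

lemma green_eq (P : Kernel X X) {A : Set X} (hA : MeasurableSet A) (x : X) :
    green P A x = ∫⁻ y, (A.indicator (fun _ => 1) y + green P A y) ∂(P x) := by
  unfold green
  rw [lintegral_add_left (measurable_const.indicator hA),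
    lintegral_tsum fun n => (measurable_iterP P hA (n + 1)).aemeasurable,
    tsum_eq_zero_add' ENNReal.summable]
  rfl

/-- If `A` is a.e. recurrent on itself, every a.e. lower bound on `A` for the expected number of
visits improves by one: the visit at time `τ_A` counts once, and the later ones at least `k`. -/
lemma green_step (P : Kernel X X) (hP : ∀ x, P x Set.univ ≤ 1) {ψ : Measure X}
    (hψ : IsMaxIrreducibility P ψ) {A : Set X} (hA : MeasurableSet A)
    (hL : ∀ᵐ x ∂ψ, x ∈ A → 1 ≤ retL P A x) (k : ℝ≥0∞)
    (hk : ∀ᵐ x ∂ψ, x ∈ A → k ≤ green P A x) :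
    ∀ᵐ x ∂ψ, x ∈ A → 1 + k ≤ green P A x := by
  have hN : ∀ N, ∀ᵐ x ∂ψ, (1 + k) * hitBy P A N x ≤ green P A x := by
    intro N
    induction N with
    | zero => simp [hitBy, retF]
    | succ N ih =>
      filter_upwards [ae_ae_of_isMax P hP hψ ih, ae_ae_of_isMax P hP hψ hk] with x h1 h2
      rw [hitBy_succ P hA, green_eq P hA, ← lintegral_const_mul _
        (Measurable.ite (p := fun y => y ∈ A) hA measurable_const (measurable_hitBy P hA N))]
      refine lintegral_mono_ae ?_
      filter_upwards [h1, h2] with y h1 h2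
      by_cases hy : y ∈ A
      · simpa [hy] using h2 hy
      · simpa [hy] using h1
  filter_upwards [hL, ae_all_iff.2 hN] with x h1 h2 hx
  have h3 : (1 + k) * retL P A x ≤ green P A x := by
    unfold retL
    rw [ENNReal.tsum_eq_iSup_nat, ENNReal.mul_iSup]
    exact iSup_le fun N => (mul_le_mul_right (Finset.sum_le_sum_of_subset
      (Finset.range_mono (Nat.le_succ N))) _).trans (h2 N)
  calc 1 + k = (1 + k) * 1 := (mul_one _).symm
    _ ≤ (1 + k) * retL P A x := mul_le_mul_right (h1 hx) _
    _ ≤ _ := h3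

/-- A set of positive measure with bounded expected number of visits cannot be almost surely
recurrent. -/
lemma exists_retL_le (P : Kernel X X) (hP : ∀ x, P x Set.univ ≤ 1) {ψ : Measure X}
    (hψ : IsMaxIrreducibility P ψ) {A : Set X} (hA : InBPlus ψ A) {M : ℝ≥0∞} (hM : M < ⊤)
    (hbd : ∀ x ∈ A, green P A x ≤ M) :
    ∃ q < 1, 0 < ψ {x ∈ A | retL P A x ≤ q} := by
  by_contra! hcon
  have hL : ∀ᵐ x ∂ψ, x ∈ A → 1 ≤ retL P A x := by
    have h1 : ∀ n : ℕ, ∀ᵐ x ∂ψ, ¬ (x ∈ A ∧ retL P A x ≤ 1 - (n : ℝ≥0∞)⁻¹) := fun n => by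
      rw [ae_iff]
      simpa using hcon (1 - (n : ℝ≥0∞)⁻¹) (ENNReal.sub_lt_self (by simp) (by simp) (by simp))
    filter_upwards [ae_all_iff.2 h1] with x hx hxA
    by_contra! hlt
    obtain ⟨n, hn⟩ := ENNReal.exists_inv_nat_lt (tsub_pos_of_lt hlt).ne'
    refine hx n ⟨hxA, ENNReal.le_sub_of_add_le_right (hn.trans_le le_top).ne ?_⟩
    rw [add_comm]
    exact (add_le_of_le_tsub_right_of_le hlt.le hn.le)
  have hk : ∀ k : ℕ, ∀ᵐ x ∂ψ, x ∈ A → (k : ℝ≥0∞) ≤ green P A x := by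
    intro k
    induction k with
    | zero => simp
    | succ k ih =>
      have := green_step P hP hψ hA.1 hL k ih
      simpa [add_comm] using this
  obtain ⟨k, hkM⟩ := ENNReal.exists_nat_gt hM.ne
  refine hA.2.ne' (measure_mono_null (fun x hx => ?_) (ae_iff.1 (hk k)))
  intro h
  exact absurd ((h hx).trans (hbd x hx)) (not_le.2 hkM)

/-! ### Drift functions -/

/-- A function `W` with `PW ≤ ρ W` controls the `n`-step probabilities of every set on which
`W` is bounded below. -/
lemma iterP_le_of_drift (P : Kernel X X) {W : X → ℝ≥0∞} (hW : Measurable W) {ρ c : ℝ≥0∞}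
    (hd : ∀ x, act P W x ≤ ρ * W x) {B : Set X} (hB : ∀ x ∈ B, 1 ≤ c * W x) (n : ℕ) (x : X) :
    iterP P n x B ≤ c * ρ ^ n * W x := by
  induction n generalizing x with
  | zero =>
    by_cases hx : x ∈ B
    · simpa [iterP, hx] using hB x hx
    · simp [iterP, hx]
  | succ n ih =>
    calc iterP P (n + 1) x B ≤ ∫⁻ y, c * ρ ^ n * W y ∂(P x) := lintegral_mono fun y => ih y
      _ = c * ρ ^ n * act P W x := lintegral_const_mul _ hW
      _ ≤ c * ρ ^ n * (ρ * W x) := mul_le_mul_right (hd x) _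
      _ = _ := by rw [pow_succ]; ring

/-- The set where a drift function is infinite is never reached from where it is finite. -/
lemma iterP_top_eq_zero (P : Kernel X X) {W : X → ℝ≥0∞} (hW : Measurable W) {ρ : ℝ≥0∞}
    (hρ : ρ < 1) (hd : ∀ x, act P W x ≤ ρ * W x) (n : ℕ) (x : X) (hx : W x < ⊤) :
    iterP P n x {y | W y = ⊤} = 0 := by
  induction n generalizing x with
  | zero => simp [iterP, hx.ne]
  | succ n ih =>
    have h1 : ∀ᵐ y ∂(P x), W y < ⊤ := ae_lt_top hW
      ((hd x).trans_lt (ENNReal.mul_lt_top (hρ.trans ENNReal.one_lt_top) hx)).ne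
    rw [iterP]
    refine lintegral_eq_zero_of_ae_eq_zero ?_
    filter_upwards [h1] with y hy using ih y hy

lemma unifGeom_of_drift (P : Kernel X X) {W : X → ℝ≥0∞} (hW : Measurable W) {ρ c d : ℝ≥0∞}
    (hρ : ρ < 1) (hc : c < ⊤) (hdt : d < ⊤)
    (hd : ∀ x, act P W x ≤ ρ * W x) {B : Set X} (hB : ∀ x ∈ B, 1 ≤ c * W x)
    (hB' : ∀ x ∈ B, W x ≤ d) : UnifGeomTransientSet P B := by
  obtain ⟨r, hρr, hr1⟩ := ENNReal.lt_iff_exists_nnreal_btwn.1 hρ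
  have hr0 : 0 < r := ENNReal.coe_pos.1 (pos_of_gt hρr)
  have hr1 : r < 1 := by exact_mod_cast hr1
  -- Any `κ > 1` with `κ ρ < 1` works; `r` is a finite positive stand-in for `ρ`, which may be `0`.
  obtain ⟨κ, hκ1, hκr⟩ := exists_between ((one_lt_inv₀ hr0).2 hr1)
  have hκ : κ * r < 1 := by
    calc κ * r < r⁻¹ * r := mul_lt_mul_of_pos_right hκr hr0
      _ = 1 := inv_mul_cancel₀ hr0.ne'
  have hκ' : (κ : ℝ≥0∞) * r < 1 := by exact_mod_cast hκ
  refine ⟨κ, hκ1, ?_⟩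
  have hfin : c * d * (1 - (κ : ℝ≥0∞) * r)⁻¹ < ⊤ :=
    ENNReal.mul_lt_top (ENNReal.mul_lt_top hc hdt)
      (ENNReal.inv_lt_top.2 (tsub_pos_of_lt hκ'))
  refine lt_of_le_of_lt (iSup₂_le fun x hx => ?_) hfin
  rw [← ENNReal.tsum_geometric, ← ENNReal.tsum_mul_left]
  refine ENNReal.tsum_le_tsum fun n => ?_
  calc (κ : ℝ≥0∞) ^ (n + 1) * iterP P (n + 1) x B
      ≤ (κ : ℝ≥0∞) ^ (n + 1) * (c * ρ ^ (n + 1) * W x) :=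
        mul_le_mul_right (iterP_le_of_drift P hW hd hB _ _) _
    _ ≤ (κ : ℝ≥0∞) ^ (n + 1) * (c * r ^ (n + 1) * d) := by
        gcongr
        exact hB' x hx
    _ = c * d * ((κ : ℝ≥0∞) * r) ^ (n + 1) := by rw [mul_pow]; ring
    _ ≤ c * d * ((κ : ℝ≥0∞) * r) ^ n :=
        mul_le_mul_right (pow_le_pow_right_of_le_one' hκ'.le (Nat.le_succ n)) _

/-! ### The implications -/

lemma retE_le_of_unifGeom (P : Kernel X X) {A B : Set X} (hB : MeasurableSet B) (h : B ⊆ A)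
    (κ : ℝ≥0∞) (x : X) :
    retE P B (fun n => κ ^ n) x ≤ ∑' n, κ ^ (n + 1) * iterP P (n + 1) x A := by
  unfold retE
  rw [tsum_eq_zero_add' ENNReal.summable]
  simp only [retF, mul_zero, zero_add]
  exact ENNReal.tsum_le_tsum fun n =>
    mul_le_mul_right ((retF_le_iterP P hB _ x).trans (iterP_mono P h _ x)) _

/-- Bernoulli's inequality applied to `κ ^ n = (s ^ n) ^ k`. -/
lemma pow_le_one_add (κ s : ℝ≥0) (k n : ℕ) (hk : k ≠ 0) (hs : s ^ k = κ) :
    (s : ℝ≥0∞) ^ n ≤ 1 + (k : ℝ≥0∞)⁻¹ * (κ : ℝ≥0∞) ^ n := by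
  have h1 : (s : ℝ) ^ n ≤ 1 + (k : ℝ)⁻¹ * (κ : ℝ) ^ n := by
    have hb := one_add_mul_le_pow (a := (s : ℝ) ^ n - 1)
      (by linarith [pow_nonneg s.coe_nonneg n]) k
    have he : (1 + ((s : ℝ) ^ n - 1)) ^ k = (κ : ℝ) ^ n := by
      rw [add_sub_cancel, ← pow_mul, mul_comm, pow_mul, ← hs]
      push_cast
      rfl
    rw [he] at hb
    have hk' : (0 : ℝ) < k := by positivity
    rw [inv_mul_eq_div, ← sub_le_iff_le_add', le_div_iff₀ hk']
    linarith
  have h2 : s ^ n ≤ 1 + (k : ℝ≥0)⁻¹ * κ ^ n := by exact_mod_cast h1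
  have h3 : ((s ^ n : ℝ≥0) : ℝ≥0∞) ≤ ((1 + (k : ℝ≥0)⁻¹ * κ ^ n : ℝ≥0) : ℝ≥0∞) := by
    exact_mod_cast h2
  rw [ENNReal.coe_add, ENNReal.coe_mul, ENNReal.coe_inv (by exact_mod_cast hk)] at h3
  simpa using h3

/-- A return probability bounded away from one and a bounded geometric moment give, for a rate
close enough to one, a geometric moment bounded away from one. -/
lemma exists_retE_lt_one (P : Kernel X X) (A : Set X) (κ : ℝ≥0) (hκ : 1 < κ)
    (hL : (⨆ x ∈ A, retL P A x) < 1)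
    (hE : (⨆ x ∈ A, retE P A (fun n => (κ : ℝ≥0∞) ^ n) x) < ⊤) :
    ∃ s : ℝ≥0, 1 < s ∧ (⨆ x ∈ A, retE P A (fun n => (s : ℝ≥0∞) ^ n) x) < 1 := by
  set l := ⨆ x ∈ A, retL P A x with hl
  set M := ⨆ x ∈ A, retE P A (fun n => (κ : ℝ≥0∞) ^ n) x with hMdef
  obtain ⟨k, hk0, hk⟩ : ∃ k : ℕ, k ≠ 0 ∧ l + (k : ℝ≥0∞)⁻¹ * M < 1 := by
    have hpos : 0 < 1 - l := tsub_pos_of_lt hL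
    obtain ⟨k, hk⟩ := ENNReal.exists_nat_mul_gt hpos.ne' hE.ne
    have hk0 : k ≠ 0 := by
      rintro rfl
      simp at hk
    refine ⟨k, hk0, ?_⟩
    have h1 : (k : ℝ≥0∞)⁻¹ * M < 1 - l := by
      rw [mul_comm, ← div_eq_mul_inv]
      exact ENNReal.div_lt_of_lt_mul' hk
    calc l + (k : ℝ≥0∞)⁻¹ * M < l + (1 - l) :=
          ENNReal.add_lt_add_left (hL.trans ENNReal.one_lt_top).ne h1
      _ = 1 := add_tsub_cancel_of_le hL.le
  refine ⟨κ ^ ((k : ℝ)⁻¹), NNReal.one_lt_rpow hκ (by positivity), lt_of_le_of_lt ?_ hk⟩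
  refine iSup₂_le fun x hx => ?_
  have hs := NNReal.rpow_inv_natCast_pow κ hk0
  calc retE P A (fun n => ((κ ^ ((k : ℝ)⁻¹) : ℝ≥0) : ℝ≥0∞) ^ n) x
      ≤ ∑' n, (retF P A n x + (k : ℝ≥0∞)⁻¹ * ((κ : ℝ≥0∞) ^ n * retF P A n x)) :=
        ENNReal.tsum_le_tsum fun n =>
          (mul_le_mul_left (pow_le_one_add κ _ k n hk0 hs) _).trans (by ring_nf; rfl)
    _ = retL P A x + (k : ℝ≥0∞)⁻¹ * retE P A (fun n => (κ : ℝ≥0∞) ^ n) x := by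
        rw [ENNReal.tsum_add, ENNReal.tsum_mul_left]
        rfl
    _ ≤ l + (k : ℝ≥0∞)⁻¹ * M :=
        add_le_add (le_iSup₂ (f := fun x _ => retL P A x) x hx) (mul_le_mul_right
          (le_iSup₂ (f := fun x _ => retE P A (fun n => (κ : ℝ≥0∞) ^ n) x) x hx) _)

lemma geomTransient_of_drift (P : Kernel X X) {ψ : Measure X} (hψ : IsMaxIrreducibility P ψ)
    {A : Set X} (hA : InBPlus ψ A) {ρ : ℝ≥0∞} (hρ : ρ < 1) {W : X → ℝ≥0∞} (hW : Measurable W)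
    (hWA : ∀ x ∈ A, W x = 1) (hd : ∀ x, act P W x ≤ ρ * W x) : GeomTransient P ψ := by
  have hpos : ∀ x, W x ≠ 0 := by
    intro x hx
    refine (hψ.1.2.2 A hA.1 hA.2 x).ne' (ENNReal.tsum_eq_zero.2 fun n => ?_)
    have := iterP_le_of_drift P hW hd (c := 1) (B := A) (fun y hy => by simp [hWA y hy]) (n + 1) x
    simpa [hx] using this
  refine ⟨hψ, {x | W x = ⊤},
    fun i => {x | ((i : ℝ≥0∞) + 1)⁻¹ ≤ W x ∧ W x ≤ (i : ℝ≥0∞) + 1}, ?_, ?_, fun i => ⟨⟨?_, ?_⟩, ?_⟩⟩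
  · by_contra hne
    obtain ⟨x₀, hx₀⟩ := nonempty_of_measure_ne_zero hA.2.ne'
    refine (hψ.1.2.2 _ (hW (measurableSet_singleton ⊤)) (pos_iff_ne_zero.2 hne) x₀).ne'
      (ENNReal.tsum_eq_zero.2 fun n => ?_)
    exact iterP_top_eq_zero P hW hρ hd (n + 1) x₀ (by simp [hWA x₀ hx₀])
  · refine Set.eq_univ_of_forall fun x => ?_
    by_cases hx : W x = ⊤
    · exact Or.inl hx
    · refine Or.inr (Set.mem_iUnion.2 ?_)
      obtain ⟨n, hn⟩ := ENNReal.exists_nat_gt hx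
      obtain ⟨m, hm⟩ := ENNReal.exists_inv_nat_lt (hpos x)
      refine ⟨max n m, (ENNReal.inv_le_inv.2 ?_).trans hm.le, hn.le.trans ?_⟩
      · refine le_trans ?_ le_self_add
        exact_mod_cast le_max_right n m
      · refine le_trans ?_ le_self_add
        exact_mod_cast le_max_left n m
  · exact (measurableSet_le measurable_const hW).inter (measurableSet_le hW measurable_const)
  · refine hA.2.trans_le (measure_mono fun x hx => ?_)
    simp [hWA x hx]
  · refine unifGeom_of_drift P hW (c := (i : ℝ≥0∞) + 1) (d := (i : ℝ≥0∞) + 1) hρ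
      (by finiteness) (by finiteness) hd (fun x hx => ?_) fun x hx => hx.2
    calc (1 : ℝ≥0∞) = ((i : ℝ≥0∞) + 1) * ((i : ℝ≥0∞) + 1)⁻¹ :=
          (ENNReal.mul_inv_cancel (by simp) (by finiteness)).symm
      _ ≤ _ := mul_le_mul_right hx.1 _

theorem geomTransient_tfae
    {X : Type*} [MeasurableSpace X] [MeasurableSpace.CountablyGenerated X]
    (P : Kernel X X) (hP : ∀ x, P x Set.univ ≤ 1) (ψ : Measure X)
    (hψ : IsMaxIrreducibility P ψ) :
    [(∃ A : Set X, InBPlus ψ A ∧ UnifGeomTransientSet P A),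
     (∃ A : Set X, InBPlus ψ A ∧ ∃ κ : ℝ≥0, 1 < κ ∧
        (⨆ x ∈ A, retE P A (fun n => (κ : ℝ≥0∞) ^ n) x) < 1),
     (∃ A : Set X, InBPlus ψ A ∧ ∃ κ : ℝ≥0, 1 < κ ∧
        (⨆ x ∈ A, retL P A x) < 1 ∧
        (⨆ x ∈ A, retE P A (fun n => (κ : ℝ≥0∞) ^ n) x) < ⊤),
     (∃ A : Set X, InBPlus ψ A ∧ ∃ b lam : ℝ≥0∞, 0 < b ∧ b < 1 ∧ 0 < lam ∧ lam < 1 ∧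
        ∃ W : X → ℝ≥0∞, Measurable W ∧ (∀ x ∈ A, 1 ≤ W x) ∧ (∃ x₀, W x₀ < ⊤) ∧
          ∀ x, act P W x ≤ if x ∈ A then b else lam * W x),
     GeomTransient P ψ].TFAE := by
  tfae_have 1 → 3 := by
    rintro ⟨A, hA, κ, hκ, hbd⟩
    have hle : ∀ x ∈ A, ∑' n, (κ : ℝ≥0∞) ^ (n + 1) * iterP P (n + 1) x A ≤ _ := fun x hx =>
      le_iSup₂ (f := fun x _ => ∑' n, (κ : ℝ≥0∞) ^ (n + 1) * iterP P (n + 1) x A) x hx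
    obtain ⟨q, hq, hpos⟩ := exists_retL_le P hP hψ hA hbd fun x hx =>
      (ENNReal.tsum_le_tsum fun n => le_mul_of_one_le_left zero_le
        (one_le_pow₀ (by exact_mod_cast hκ.le))).trans (hle x hx)
    have hB : MeasurableSet {x ∈ A | retL P A x ≤ q} :=
      hA.1.inter (measurableSet_le (measurable_retL P hA.1) measurable_const)
    refine ⟨_, ⟨hB, hpos⟩, κ, hκ, lt_of_le_of_lt (iSup₂_le fun x hx => ?_) hq,
      lt_of_le_of_lt (iSup₂_le fun x hx => ?_) hbd⟩
    · exact (retL_mono P hP hB hA.1 (fun y hy => hy.1) x).trans hx.2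
    · exact (retE_le_of_unifGeom P hB (fun y hy => hy.1) κ x).trans (hle x hx.1)
  tfae_have 3 → 2 := by
    rintro ⟨A, hA, κ, hκ, hL, hE⟩
    exact ⟨A, hA, exists_retE_lt_one P A κ hκ hL hE⟩
  tfae_have 2 → 4 := by
    rintro ⟨A, hA, κ, hκ, hE⟩
    have hκ1 : (1 : ℝ≥0∞) < κ := by exact_mod_cast hκ
    have hinv : (κ : ℝ≥0∞)⁻¹ < 1 := ENNReal.inv_lt_one.2 hκ1
    have hact : ∀ x, act P (hitE P A fun n => (κ : ℝ≥0∞) ^ n) x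
        = (κ : ℝ≥0∞)⁻¹ * retE P A (fun n => (κ : ℝ≥0∞) ^ n) x := fun x => by
      rw [retE_pow_eq P hA.1, ← mul_assoc,
        ENNReal.inv_mul_cancel (zero_lt_one.trans hκ1).ne' ENNReal.coe_ne_top, one_mul]
    obtain ⟨x₀, hx₀⟩ := nonempty_of_measure_ne_zero hA.2.ne'
    refine ⟨A, hA, (κ : ℝ≥0∞)⁻¹, (κ : ℝ≥0∞)⁻¹, by simp, hinv, by simp, hinv,
      hitE P A fun n => (κ : ℝ≥0∞) ^ n,
      Measurable.ite hA.1 measurable_const (measurable_retE P hA.1 _),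
      fun x hx => by simp [hitE, hx], ⟨x₀, by simp [hitE, hx₀]⟩, fun x => ?_⟩
    rw [hact]
    split_ifs with hx
    · refine mul_le_of_le_one_right zero_le (le_trans ?_ hE.le)
      exact le_iSup₂ (f := fun x _ => retE P A (fun n => (κ : ℝ≥0∞) ^ n) x) x hx
    · simp [hitE, hx]
  tfae_have 4 → 5 := by
    rintro ⟨A, hA, b, lam, -, hb, -, hlam, W, hW, hWA, -, hd⟩
    -- The bound `PW ≤ b` on `A` becomes `PW ≤ b W` once `W` is lowered to `1` there.
    refine geomTransient_of_drift P hψ hA (max_lt hb hlam)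
      (W := fun x => if x ∈ A then 1 else W x) (Measurable.ite hA.1 measurable_const hW)
      (fun x hx => by simp [hx]) fun x => ?_
    have h1 : act P (fun x => if x ∈ A then 1 else W x) x ≤ act P W x :=
      lintegral_mono fun y => by
        by_cases hy : y ∈ A
        · simpa [hy] using hWA y hy
        · simp [hy]
    refine (h1.trans (hd x)).trans ?_
    split_ifs with hx
    · simp
    · exact mul_le_mul_left (le_max_right _ _) _
  tfae_have 5 → 1 := by
    rintro ⟨-, D, A, -, -, hA⟩
    exact ⟨A 0, hA 0⟩
  tfae_finish

end MarkovTransience
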